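/- The expected cost of the adaptive greedy policy equals the total expected revenue it collects from the markers: E[C(σ)] = Σ_{i=1}^{|N(σ)|} E[λ_i]. -/

import Mathlib

/-!
Common framework for the Stochastic Submodular Cover problem
(Hellerstein–Kletenik–Parthasarathy, "A Tight Bound for Stochastic Submodular Cover").
-/

namespace SSC

open Finset
open scoped Classical

noncomputable section

variable {E O : Type*}

/-- A subrealization assigns to each item either a state or `none` (unassigned).
A realization corresponds to the case where every item is assigned. -/
abbrev Sub (E O : Type*) := E → Option O

/-- `subext ψ ψ'` means `ψ ⊆ ψ'` as partial assignments of states to items. -/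
def subext (ψ ψ' : Sub E O) : Prop := ∀ e o, ψ e = some o → ψ' e = some o

/-- `ssubext ψ ψ'` means `ψ ⊂ ψ'` (strict extension). -/
def ssubext (ψ ψ' : Sub E O) : Prop := subext ψ ψ' ∧ ψ ≠ ψ'

/-- Extend a subrealization `ψ` by assigning state `o` to item `e`. -/
def updateSub [DecidableEq E] (ψ : Sub E O) (e : E) (o : O) : Sub E O :=
  fun e' => if e' = e then some o else ψ e'

/-- View a (full) realization as a subrealization. -/
def toSub (φ : E → O) : Sub E O := fun e => some (φ e)

variable [Fintype E] [DecidableEq E] [Fintype O] [DecidableEq O]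

/-- An instance of the Stochastic Submodular Cover problem: positive item costs `c`,
a probability mass function `p` on realizations with mutually independent item states,
and a utility function `f` on subrealizations which is zero on the empty subrealization,
nonnegative, monotone and submodular (pointwise polymatroid), and equal to the goal
value `Q > 0` on every full realization (coverability). -/
structure Problem (E O : Type*) [Fintype E] [DecidableEq E] [Fintype O] [DecidableEq O] where
  c : E → ℝ
  c_pos : ∀ e, 0 < c e
  p : (E → O) → ℝ
  p_nonneg : ∀ φ, 0 ≤ p φ
  p_sum : ∑ φ : E → O, p φ = 1
  indep : ∀ φ : E → O, p φ = ∏ e : E, ∑ φ' : E → O, if φ' e = φ e then p φ' else 0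
  f : Sub E O → ℝ
  f_nonneg : ∀ ψ, 0 ≤ f ψ
  f_empty : f (fun _ => none) = 0
  f_mono : ∀ ψ ψ' : Sub E O, subext ψ ψ' → f ψ ≤ f ψ'
  f_submod : ∀ (ψ ψ' : Sub E O) (e : E) (o : O), subext ψ ψ' → ψ' e = none →
      f (updateSub ψ' e o) - f ψ' ≤ f (updateSub ψ e o) - f ψ
  Q : ℝ
  Q_pos : 0 < Q
  f_cover : ∀ φ : E → O, f (toSub φ) = Q

variable (M : Problem E O)

/-- Expectation of a random variable `X` with respect to the random realization `Φ`. -/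
def Ex (X : (E → O) → ℝ) : ℝ := ∑ φ : E → O, M.p φ * X φ

/-- Probability of an event `A` of the random realization `Φ`. -/
def Pr (A : (E → O) → Prop) : ℝ := ∑ φ : E → O, if A φ then M.p φ else 0

/-- Conditional expectation `E[X | A]`. -/
def cEx (X : (E → O) → ℝ) (A : (E → O) → Prop) : ℝ :=
  (∑ φ : E → O, if A φ then M.p φ * X φ else 0) / Pr M A

/-- The random marginal increase in utility `F_ψ(e)` from observing the state of `e`. -/
def Fm (ψ : Sub E O) (e : E) (φ : E → O) : ℝ := M.f (updateSub ψ e (φ e)) - M.f ψ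

/-- The unit price `υ(e|ψ) = c(e) / E[F_ψ(e)]`. -/
def price (ψ : Sub E O) (e : E) : ℝ := M.c e / Ex M (Fm M ψ e)

/-- An adaptive covering policy: at every subrealization `ψ` with `f ψ < Q` it selects an
item outside `dom ψ`. -/
def IsPolicy (π : Sub E O → E) : Prop := ∀ ψ : Sub E O, M.f ψ < M.Q → ψ (π ψ) = none

/-- The `α`-approximate adaptive greedy policy: at every `ψ` with `f ψ < Q` the unit price of
the selected item `σ ψ` is at most `α` times the minimum unit price, i.e.
`υ(σ ψ | ψ) ≤ α · υ(e | ψ)` for every `e ∉ dom ψ`, written multiplicatively so that infinite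
unit prices (zero expected marginal utility) are handled correctly. -/
def IsGreedy (α : ℝ) (σ : Sub E O → E) : Prop :=
  IsPolicy M σ ∧
    ∀ ψ : Sub E O, M.f ψ < M.Q → ∀ e : E, ψ e = none →
      M.c (σ ψ) * Ex M (Fm M ψ e) ≤ α * M.c e * Ex M (Fm M ψ (σ ψ))

/-- One step of executing policy `π` on realization `φ`. -/
def stepPol (π : Sub E O → E) (φ : E → O) (ψ : Sub E O) : Sub E O :=
  if M.f ψ < M.Q then updateSub ψ (π ψ) (φ (π ψ)) else ψ

/-- The subrealization reached after `n` steps of executing `π` on `φ`. -/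
def execAux (π : Sub E O → E) (φ : E → O) : ℕ → Sub E O
  | 0 => fun _ => none
  | n + 1 => stepPol M π φ (execAux π φ n)

/-- The cover `Ψ(π)` constructed by executing `π` on realization `φ`. -/
def cover (π : Sub E O → E) (φ : E → O) : Sub E O := execAux M π φ (Fintype.card E)

/-- `ψ` is visited when executing `π` on realization `φ`. -/
def visits (π : Sub E O → E) (φ : E → O) (ψ : Sub E O) : Prop := ∃ n, execAux M π φ n = ψ

/-- The set `S(π)` of items selected when executing `π` on `φ`. -/
def Ssel (π : Sub E O → E) (φ : E → O) : Finset E :=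
  Finset.univ.filter fun e => cover M π φ e ≠ none

/-- The cost `C(π)` incurred when executing `π` on `φ`. -/
def C (π : Sub E O → E) (φ : E → O) : ℝ := ∑ e ∈ Ssel M π φ, M.c e

/-- An adaptive covering policy of minimum expected cost. -/
def IsOptimal (π : Sub E O → E) : Prop :=
  IsPolicy M π ∧ ∀ π' : Sub E O → E, IsPolicy M π' → Ex M (C M π) ≤ Ex M (C M π')

/-- `N(π)`: the non-leaf nodes of the decision tree of `π` — subrealizations with
`f ψ < Q` that are visited with positive probability. -/
def Nnodes (π : Sub E O → E) : Finset (Sub E O) :=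
  Finset.univ.filter fun ψ => M.f ψ < M.Q ∧ 0 < Pr M fun φ => visits M π φ ψ

/-- The event `ψ ↝ i`, for a marker located at utility value `b = f(ρ_i)`:
`ψ` is the last subrealization visited by `σ` (on the given realization) whose
utility is at most `b`. -/
def leadsTo (σ : Sub E O → E) (b : ℝ) (ψ : Sub E O) (φ : E → O) : Prop :=
  visits M σ φ ψ ∧ M.f ψ ≤ b ∧
    ∀ ψ' : Sub E O, visits M σ φ ψ' → M.f ψ' ≤ b → subext ψ' ψ

/-- The revenue `λ_i = υ_ψ · ε_i` collected by `σ` from the marker located at utility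
value `b = f(ρ_i)` with interval length `εi`, where `ψ` is the unique subrealization
with `ψ ↝ i`. -/
def lam (σ : Sub E O → E) (b εi : ℝ) (φ : E → O) : ℝ :=
  ∑ ψ : Sub E O, if leadsTo M σ b ψ φ then price M ψ (σ ψ) * εi else 0

/-- The revenue `μ(e)` collected by the optimal policy `πs` from item `e`
(relative to the greedy policy `σ`, both executed on the same realization). -/
def mu (σ πs : Sub E O → E) (e : E) (φ : E → O) : ℝ :=
  if e ∈ Ssel M πs φ then
    if e ∈ Ssel M σ φ then
      ∑ ψ : Sub E O,
        if visits M σ φ ψ ∧ M.f ψ < M.Q ∧ σ ψ = e then price M ψ e * Fm M ψ e φ else 0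
    else M.c e
  else 0

/-- The total revenue `μ*` collected by the optimal policy. -/
def muStar (σ πs : Sub E O → E) (φ : E → O) : ℝ := ∑ e : E, mu M σ πs e φ

/-- Replay of the internal state of policy `πs` in the second stage of the hybrid policy:
starting from the empty subrealization, repeatedly query `πs`; an item whose state is
already recorded in `ψ'` is not re-selected, its recorded state being used instead. -/
def replayAux (πs : Sub E O → E) (ψ' : Sub E O) : ℕ → Sub E O
  | 0 => fun _ => none
  | n + 1 =>
    if M.f (replayAux πs ψ' n) < M.Q then
      match ψ' (πs (replayAux πs ψ' n)) with
      | some o => updateSub (replayAux πs ψ' n) (πs (replayAux πs ψ' n)) o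
      | none => replayAux πs ψ' n
    else replayAux πs ψ' n

/-- The hybrid policy `π^ψ0`: follow `σ` until `ψ0` is visited, then switch to executing
`πs` from the root of its tree, never re-selecting an item of `dom ψ0` and using the
state recorded in `ψ0` instead. -/
def hybrid (σ πs : Sub E O → E) (ψ0 : Sub E O) : Sub E O → E := fun ψ' =>
  if subext ψ0 ψ' then πs (replayAux M πs ψ' (Fintype.card E)) else σ ψ'

/-- `δ⁺_ψ0(e)`: the marginal utility obtained by the hybrid policy `π^ψ0` when it selects
`e` during its second stage, and `0` if `e` is not selected in the second stage. -/
def deltaPlus (σ πs : Sub E O → E) (ψ0 : Sub E O) (e : E) (φ : E → O) : ℝ :=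
  ∑ ψ' : Sub E O,
    if subext ψ0 ψ' ∧ visits M (hybrid M σ πs ψ0) φ ψ' ∧
        ssubext ψ' (cover M (hybrid M σ πs ψ0) φ) ∧ hybrid M σ πs ψ0 ψ' = e
    then Fm M ψ' e φ else 0

/-!
Both sides split over the nodes `ψ` of the decision tree visited by the execution. The cost is the
sum of `c (σ ψ)` over these nodes. The markers leading to a visited `ψ` are those placed between the
utility of `ψ` and that of its successor; both utilities are marker positions, so the marker
intervals tile the gap and the revenue collected at `ψ` is `υ_ψ · F_ψ(σ ψ)`. Whether `ψ` is visited
depends only on the states of the items in `dom ψ`, so it is independent of `F_ψ(σ ψ)`, and the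
expected revenue at `ψ` is `υ_ψ · Pr[ψ visited] · E[F_ψ(σ ψ)] = Pr[ψ visited] · c (σ ψ)`. Here
`E[F_ψ(σ ψ)] ≠ 0`, because submodularity makes some item useful at `ψ` and greediness passes this on
to `σ ψ`.
-/

section Telescoping

lemma update_add_one_of_le {P : Type*} (b : ℕ → P) (x : P) {i t : ℕ} (hi : i ≤ t) :
    Function.update b (t + 1) x i = b i :=
  Function.update_of_ne (Nat.lt_succ_of_le hi).ne x b

lemma notMem_Ioo_of_monotoneOn {P : Type*} [Preorder P] {g : ℕ → P} {m n : ℕ}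
    (hg : MonotoneOn g (Set.Icc m n)) {x : P} (hx : x ∈ g '' Set.Icc m n) {i : ℕ}
    (hi : i ∈ Finset.Ico m n) : x ∉ Set.Ioo (g i) (g (i + 1)) := by
  rintro ⟨hix, hxi⟩
  obtain ⟨j, hj, rfl⟩ := hx
  obtain ⟨hmi, hin⟩ := Finset.mem_Ico.1 hi
  rcases Nat.lt_or_ge i j with hij | hji
  · exact (hg ⟨hmi.trans i.le_succ, hin⟩ hj hij).not_gt hxi
  · exact (hg hj ⟨hmi, hin.le⟩ hji).not_gt hix

lemma ite_sub_eq_clamp_sub_clamp {G : Type*} [AddGroup G] [LinearOrder G] {a b x y : G}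
    (hab : a ≤ b) (hxy : x ≤ y) (ha : a ∉ Set.Ioo x y) (hb : b ∉ Set.Ioo x y) :
    (if a ≤ x ∧ x < b then y - x else 0) = max a (min y b) - max a (min x b) := by
  rcases lt_or_ge x a with hxa | hax
  · have hya : y ≤ a := not_lt.1 fun hay => ha ⟨hxa, hay⟩
    simp [hxa.not_ge, hxa.le, hya, hya.trans hab, hxa.le.trans hab]
  rcases lt_or_ge x b with hxb | hbx
  · have hyb : y ≤ b := not_lt.1 fun hby => hb ⟨hxb, hby⟩
    simp [hax, hxb, hxb.le, hyb, hax.trans hxy]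
  · simp [hbx.not_gt, hbx, hbx.trans hxy]

lemma sum_ite_sub_eq_sub {G : Type*} [AddCommGroup G] [LinearOrder G] {g : ℕ → G} {m n : ℕ}
    (hg : MonotoneOn g (Set.Icc m n)) {a b : G}
    (ha : a ∈ g '' Set.Icc m n) (hb : b ∈ g '' Set.Icc m n) (hab : a ≤ b) :
    ∑ i ∈ Finset.Ico m n, (if a ≤ g i ∧ g i < b then g (i + 1) - g i else 0) = b - a := by
  have hmn : m ≤ n := by obtain ⟨j, hj, -⟩ := ha; exact hj.1.trans hj.2
  have hm : m ∈ Set.Icc m n := Set.left_mem_Icc.2 hmn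
  have hn : n ∈ Set.Icc m n := Set.right_mem_Icc.2 hmn
  have hga : g m ≤ a := by obtain ⟨j, hj, rfl⟩ := ha; exact hg hm hj hj.1
  have hbg : b ≤ g n := by obtain ⟨j, hj, rfl⟩ := hb; exact hg hj hn hj.2
  calc ∑ i ∈ Finset.Ico m n, (if a ≤ g i ∧ g i < b then g (i + 1) - g i else 0)
      = ∑ i ∈ Finset.Ico m n, (max a (min (g (i + 1)) b) - max a (min (g i) b)) := by
        refine Finset.sum_congr rfl fun i hi => ?_
        obtain ⟨hmi, hin⟩ := Finset.mem_Ico.1 hi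
        exact ite_sub_eq_clamp_sub_clamp hab
          (hg ⟨hmi, hin.le⟩ ⟨hmi.trans i.le_succ, hin⟩ i.le_succ)
          (notMem_Ioo_of_monotoneOn hg ha hi) (notMem_Ioo_of_monotoneOn hg hb hi)
    _ = max a (min (g n) b) - max a (min (g m) b) :=
        Finset.sum_Ico_sub (fun i => max a (min (g i) b)) hmn
    _ = b - a := by
        rw [min_eq_right hbg, max_eq_right hab, max_eq_left ((min_le_left _ _).trans hga)]

end Telescoping

section Subrealization

variable {ι κ : Type*}

lemma subext.refl (ψ : Sub ι κ) : subext ψ ψ := fun _ _ h => h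

lemma subext.trans {ψ₁ ψ₂ ψ₃ : Sub ι κ} (h₁₂ : subext ψ₁ ψ₂) (h₂₃ : subext ψ₂ ψ₃) :
    subext ψ₁ ψ₃ :=
  fun e o h => h₂₃ e o (h₁₂ e o h)

lemma updateSub_eq_update [DecidableEq ι] (ψ : Sub ι κ) (e : ι) (o : κ) :
    updateSub ψ e o = Function.update ψ e (some o) := by
  funext e'
  simp only [updateSub, Function.update_apply]

lemma subext_updateSub [DecidableEq ι] {ψ : Sub ι κ} {e : ι} (he : ψ e = none) (o : κ) :
    subext ψ (updateSub ψ e o) := by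
  intro e' o' h
  have hne : e' ≠ e := by rintro rfl; simp [he] at h
  rwa [updateSub_eq_update, Function.update_of_ne hne]

end Subrealization

section Expectation

variable {M : Problem E O} {X Y : (E → O) → ℝ}

lemma ex_congr (h : ∀ φ, 0 < M.p φ → X φ = Y φ) : Ex M X = Ex M Y := by
  refine Finset.sum_congr rfl fun φ _ => ?_
  rcases (M.p_nonneg φ).eq_or_lt with hp | hp
  · rw [← hp, zero_mul, zero_mul]
  · rw [h φ hp]

lemma ex_sum {ι : Type*} (s : Finset ι) (X : ι → (E → O) → ℝ) :
    Ex M (fun φ => ∑ i ∈ s, X i φ) = ∑ i ∈ s, Ex M (X i) := by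
  simp only [Ex, Finset.mul_sum]
  exact Finset.sum_comm

lemma ex_const_mul (a : ℝ) (X : (E → O) → ℝ) : Ex M (fun φ => a * X φ) = a * Ex M X := by
  simp only [Ex, Finset.mul_sum, mul_left_comm]

lemma ex_nonneg (hX : ∀ φ, 0 ≤ X φ) : 0 ≤ Ex M X :=
  Finset.sum_nonneg fun φ _ => mul_nonneg (M.p_nonneg φ) (hX φ)

lemma ex_pos (hX : ∀ φ, 0 ≤ X φ) {φ : E → O} (hp : 0 < M.p φ) (hφ : 0 < X φ) : 0 < Ex M X :=
  Finset.sum_pos' (fun φ _ => mul_nonneg (M.p_nonneg φ) (hX φ))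
    ⟨φ, Finset.mem_univ φ, mul_pos hp hφ⟩

lemma ex_indicator (A : (E → O) → Prop) : Ex M (fun φ => if A φ then 1 else 0) = Pr M A := by
  simp only [Ex, Pr, mul_ite, mul_one, mul_zero]

lemma pr_pos_iff {A : (E → O) → Prop} : 0 < Pr M A ↔ ∃ φ, 0 < M.p φ ∧ A φ := by
  have hnonneg : ∀ φ ∈ Finset.univ, 0 ≤ if A φ then M.p φ else 0 := fun φ _ =>
    ite_nonneg (M.p_nonneg φ) le_rfl
  rw [Pr, Finset.sum_pos_iff_of_nonneg hnonneg]
  refine exists_congr fun φ => ?_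
  by_cases hA : A φ <;> simp [hA]

lemma p_piecewise_mul_p_piecewise (s : Set E) (φ φ' : E → O) :
    M.p (s.piecewise φ' φ) * M.p (s.piecewise φ φ') = M.p φ * M.p φ' := by
  rw [M.indep φ, M.indep φ', M.indep (s.piecewise φ' φ), M.indep (s.piecewise φ φ'),
    ← Finset.prod_mul_distrib, ← Finset.prod_mul_distrib]
  refine Finset.prod_congr rfl fun e _ => ?_
  by_cases he : e ∈ s
  · simp only [Set.piecewise_eq_of_mem _ _ _ he, mul_comm]
  · simp only [Set.piecewise_eq_of_notMem _ _ _ he]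

-- For two independent copies `φ, φ'` of the realization, exchanging their coordinates in `t`
-- preserves the law of the pair, leaves `X φ` unchanged and turns `Y φ` into `Y φ'`.
lemma ex_mul_of_dependsOn {s t : Set E} (hst : Disjoint s t) (hX : DependsOn X s)
    (hY : DependsOn Y t) : Ex M (fun φ => X φ * Y φ) = Ex M X * Ex M Y := by
  let swap : (E → O) × (E → O) → (E → O) × (E → O) := fun x =>
    (t.piecewise x.2 x.1, t.piecewise x.1 x.2)
  have hswap : Function.Involutive swap := by
    rintro ⟨φ, φ'⟩
    ext e <;> by_cases he : e ∈ t <;> simp [swap, he]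
  have hXswap : ∀ φ φ', X (t.piecewise φ' φ) = X φ := fun φ φ' =>
    hX fun e he => Set.piecewise_eq_of_notMem _ _ _ (hst.notMem_of_mem_left he)
  have hYswap : ∀ φ φ', Y (t.piecewise φ φ') = Y φ := fun φ φ' =>
    hY fun e he => Set.piecewise_eq_of_mem _ _ _ he
  calc Ex M (fun φ => X φ * Y φ)
      = ∑ x : (E → O) × (E → O), M.p x.1 * M.p x.2 * (X x.1 * Y x.1) := by
        simp only [Fintype.sum_prod_type, mul_right_comm _ (M.p _), ← Finset.mul_sum, M.p_sum,
          mul_one, Ex]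
    _ = ∑ x : (E → O) × (E → O), M.p x.1 * M.p x.2 * (X x.1 * Y x.2) := by
        refine Fintype.sum_bijective swap hswap.bijective _ _ fun x => ?_
        simp only [swap, p_piecewise_mul_p_piecewise, hXswap, hYswap]
    _ = Ex M X * Ex M Y := by
        simp only [Ex, Fintype.sum_prod_type, Finset.sum_mul_sum, mul_mul_mul_comm]

end Expectation

section MarginalGain

variable {M : Problem E O} {ψ : Sub E O} {e : E} {φ : E → O}

lemma fm_nonneg (he : ψ e = none) (φ : E → O) : 0 ≤ Fm M ψ e φ :=
  sub_nonneg.2 (M.f_mono _ _ (subext_updateSub he _))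

lemma fm_eq_zero_of_eq_some (he : ψ e = some (φ e)) : Fm M ψ e φ = 0 := by
  rw [Fm, updateSub_eq_update, ← he, Function.update_eq_self, sub_self]

lemma dependsOn_fm (ψ : Sub E O) (e : E) : DependsOn (Fm M ψ e) {e} := by
  intro φ φ' h
  rw [Fm, Fm, h e rfl]

lemma f_piecewise_le (hψ : subext ψ (toSub φ)) (S : Finset E) :
    M.f (S.piecewise (toSub φ) ψ) ≤ M.f ψ + ∑ e ∈ S, Fm M ψ e φ := by
  induction S using Finset.induction_on with
  | empty => simp
  | insert e S heS ih =>
    set χ : Sub E O := S.piecewise (toSub φ) ψ with hχ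
    have hχe : χ e = ψ e := Finset.piecewise_eq_of_notMem _ _ _ heS
    rw [Finset.piecewise_insert, ← hχ, Finset.sum_insert heS, toSub, ← updateSub_eq_update]
    cases hψe : ψ e with
    | none =>
      have hψχ : subext ψ χ := fun e' o h => by
        by_cases he' : e' ∈ S <;> simp [hχ, he', h, hψ e' o h]
      have hsubmod := M.f_submod ψ χ e (φ e) hψχ (hχe.trans hψe)
      rw [Fm]
      linarith
    | some o =>
      have hψφ : ψ e = some (φ e) := hψe.trans (hψ e o hψe).symm
      rw [fm_eq_zero_of_eq_some hψφ, zero_add, updateSub_eq_update, ← hψφ, ← hχe,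
        Function.update_eq_self]
      exact ih

lemma exists_fm_pos (hψ : subext ψ (toSub φ)) (hf : M.f ψ < M.Q) :
    ∃ e, ψ e = none ∧ 0 < Fm M ψ e φ := by
  have hQ : M.Q ≤ M.f ψ + ∑ e, Fm M ψ e φ := by
    simpa only [Finset.piecewise_univ, M.f_cover] using f_piecewise_le (M := M) hψ Finset.univ
  obtain ⟨e, -, he⟩ : ∃ e ∈ Finset.univ, 0 < Fm M ψ e φ :=
    Finset.exists_lt_of_sum_lt (by rw [Finset.sum_const_zero]; linarith)
  refine ⟨e, Option.eq_none_iff_forall_ne_some.2 fun o ho => he.ne' ?_, he⟩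
  exact fm_eq_zero_of_eq_some (ho.trans (hψ e o ho).symm)

end MarginalGain

section Execution

variable {M : Problem E O} {π : Sub E O → E} {φ : E → O} {ψ : Sub E O} {m n : ℕ}

lemma execAux_succ_of_lt (h : M.f (execAux M π φ n) < M.Q) :
    execAux M π φ (n + 1) =
      updateSub (execAux M π φ n) (π (execAux M π φ n)) (φ (π (execAux M π φ n))) :=
  if_pos h

lemma execAux_succ_of_not_lt (h : ¬ M.f (execAux M π φ n) < M.Q) :
    execAux M π φ (n + 1) = execAux M π φ n :=
  if_neg h

lemma execAux_succ_apply_select (h : M.f (execAux M π φ n) < M.Q) :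
    execAux M π φ (n + 1) (π (execAux M π φ n)) = some (φ (π (execAux M π φ n))) := by
  rw [execAux_succ_of_lt h, updateSub_eq_update, Function.update_self]

lemma execAux_subext_toSub (M : Problem E O) (π : Sub E O → E) (φ : E → O) (n : ℕ) :
    subext (execAux M π φ n) (toSub φ) := by
  induction n with
  | zero => exact fun e o h => absurd h (Option.some_ne_none o).symm
  | succ n ih =>
    by_cases hf : M.f (execAux M π φ n) < M.Q
    · intro e o h
      rw [execAux_succ_of_lt hf, updateSub_eq_update, Function.update_apply] at h
      split_ifs at h with he
      · rwa [he]
      · exact ih e o h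
    · rwa [execAux_succ_of_not_lt hf]

lemma visits.subext_toSub (h : visits M π φ ψ) : subext ψ (toSub φ) := by
  obtain ⟨n, rfl⟩ := h
  exact execAux_subext_toSub M π φ n

lemma visits.f_le_Q (h : visits M π φ ψ) : M.f ψ ≤ M.Q :=
  (M.f_mono _ _ h.subext_toSub).trans_eq (M.f_cover φ)

lemma exists_select_eq_of_execAux_ne_none {e : E} (h : execAux M π φ n e ≠ none) :
    ∃ k, M.f (execAux M π φ k) < M.Q ∧ π (execAux M π φ k) = e := by
  induction n with
  | zero => exact absurd rfl h
  | succ n ih =>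
    by_cases hf : M.f (execAux M π φ n) < M.Q
    · by_cases he : e = π (execAux M π φ n)
      · exact ⟨n, hf, he.symm⟩
      · rw [execAux_succ_of_lt hf, updateSub_eq_update, Function.update_of_ne he] at h
        exact ih h
    · rw [execAux_succ_of_not_lt hf] at h
      exact ih h

lemma IsPolicy.subext_execAux (hπ : IsPolicy M π) (φ : E → O) (h : m ≤ n) :
    subext (execAux M π φ m) (execAux M π φ n) := by
  induction n, h using Nat.le_induction with
  | base => exact subext.refl _
  | succ n _ ih =>
    by_cases hf : M.f (execAux M π φ n) < M.Q
    · rw [execAux_succ_of_lt hf]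
      exact ih.trans (subext_updateSub (hπ _ hf) _)
    · rwa [execAux_succ_of_not_lt hf]

lemma IsPolicy.f_execAux_mono (hπ : IsPolicy M π) (φ : E → O) :
    Monotone fun n => M.f (execAux M π φ n) :=
  fun _ _ h => M.f_mono _ _ (hπ.subext_execAux φ h)

lemma IsPolicy.select_ne_of_lt (hπ : IsPolicy M π) (hmn : m < n)
    (hn : M.f (execAux M π φ n) < M.Q) : π (execAux M π φ m) ≠ π (execAux M π φ n) := by
  intro heq
  have hm : M.f (execAux M π φ m) < M.Q := (hπ.f_execAux_mono φ hmn.le).trans_lt hn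
  have hobserved := hπ.subext_execAux φ hmn _ _ (execAux_succ_apply_select hm)
  rw [heq, hπ _ hn] at hobserved
  exact (Option.some_ne_none _).symm hobserved

lemma IsPolicy.injOn_select (hπ : IsPolicy M π) (φ : E → O) :
    Set.InjOn (fun n => π (execAux M π φ n)) {n | M.f (execAux M π φ n) < M.Q} := by
  intro m hm n hn heq
  rcases lt_trichotomy m n with h | h | h
  · exact absurd heq (hπ.select_ne_of_lt h hn)
  · exact h
  · exact absurd heq.symm (hπ.select_ne_of_lt h hm)

lemma IsPolicy.lt_card_of_f_execAux_lt (hπ : IsPolicy M π) (hn : M.f (execAux M π φ n) < M.Q) :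
    n < Fintype.card E := by
  have hinj : Set.InjOn (fun k => π (execAux M π φ k)) (Finset.range (n + 1)) :=
    (hπ.injOn_select φ).mono fun k hk =>
      (hπ.f_execAux_mono φ (Finset.mem_range_succ_iff.1 hk)).trans_lt hn
  have hcard := Finset.card_le_card_of_injOn _ (fun k _ => Finset.mem_univ _) hinj
  rwa [Finset.card_range] at hcard

lemma IsPolicy.execAux_congr (hπ : IsPolicy M π) {φ' : E → O}
    (h : ∀ e, execAux M π φ n e ≠ none → φ' e = φ e) :
    execAux M π φ' n = execAux M π φ n := by
  induction n with
  | zero => rfl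
  | succ n ih =>
    have hprev : execAux M π φ' n = execAux M π φ n := by
      refine ih fun e he => h e ?_
      obtain ⟨o, ho⟩ := Option.ne_none_iff_exists'.1 he
      rw [hπ.subext_execAux φ n.le_succ e o ho]
      exact Option.some_ne_none o
    by_cases hf : M.f (execAux M π φ n) < M.Q
    · have hstate := h _ (by rw [execAux_succ_apply_select hf]; exact Option.some_ne_none _)
      rw [execAux_succ_of_lt hf, execAux_succ_of_lt (hprev ▸ hf), hprev, hstate]
    · rw [execAux_succ_of_not_lt hf, execAux_succ_of_not_lt (hprev ▸ hf), hprev]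

lemma IsPolicy.dependsOn_visits (hπ : IsPolicy M π) (ψ : Sub E O) :
    DependsOn (fun φ => visits M π φ ψ) {e | ψ e ≠ none} := by
  have himp : ∀ φ φ' : E → O, (∀ e, ψ e ≠ none → φ' e = φ e) →
      visits M π φ ψ → visits M π φ' ψ := by
    rintro φ φ' h ⟨n, rfl⟩
    exact ⟨n, hπ.execAux_congr h⟩
  intro φ φ' h
  exact propext ⟨himp φ φ' fun e he => (h e he).symm, himp φ' φ h⟩

lemma IsPolicy.ex_visits_mul_fm (hπ : IsPolicy M π) {e : E} (he : ψ e = none) :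
    Ex M (fun φ => (if visits M π φ ψ then 1 else 0) * Fm M ψ e φ) =
      Pr M (fun φ => visits M π φ ψ) * Ex M (Fm M ψ e) := by
  have hdisj : Disjoint {e | ψ e ≠ none} {e} := by simpa using he
  have hvisits : DependsOn (fun φ => if visits M π φ ψ then (1 : ℝ) else 0) {e | ψ e ≠ none} :=
    fun φ φ' h => by simp only [hπ.dependsOn_visits ψ h]
  rw [ex_mul_of_dependsOn hdisj hvisits (dependsOn_fm ψ e), ex_indicator]

end Execution

section VisitedNodes

variable {M : Problem E O} {π : Sub E O → E} {φ : E → O} {ψ : Sub E O}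

/-- The non-leaf nodes on the root-to-leaf path that the execution of `π` on `φ` follows in the
decision tree of `π`. -/
def visitedNodes (M : Problem E O) (π : Sub E O → E) (φ : E → O) : Finset (Sub E O) :=
  Finset.univ.filter fun ψ => visits M π φ ψ ∧ M.f ψ < M.Q

lemma mem_visitedNodes : ψ ∈ visitedNodes M π φ ↔ visits M π φ ψ ∧ M.f ψ < M.Q := by
  simp only [visitedNodes, Finset.mem_filter, Finset.mem_univ, true_and]

lemma mem_Nnodes_iff :
    ψ ∈ Nnodes M π ↔ M.f ψ < M.Q ∧ ∃ φ, 0 < M.p φ ∧ visits M π φ ψ := by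
  simp only [Nnodes, Finset.mem_filter, Finset.mem_univ, true_and, pr_pos_iff]

lemma visitedNodes_eq_filter_Nnodes (hp : 0 < M.p φ) :
    visitedNodes M π φ = (Nnodes M π).filter (visits M π φ) := by
  ext ψ
  rw [mem_visitedNodes, Finset.mem_filter, mem_Nnodes_iff]
  exact ⟨fun ⟨hv, hf⟩ => ⟨⟨hf, φ, hp, hv⟩, hv⟩, fun ⟨⟨hf, _⟩, hv⟩ => ⟨hv, hf⟩⟩

lemma ex_sum_visitedNodes (X : Sub E O → (E → O) → ℝ) :
    Ex M (fun φ => ∑ ψ ∈ visitedNodes M π φ, X ψ φ) =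
      ∑ ψ ∈ Nnodes M π, Ex M (fun φ => (if visits M π φ ψ then 1 else 0) * X ψ φ) := by
  rw [← ex_sum]
  refine ex_congr fun φ hp => ?_
  rw [visitedNodes_eq_filter_Nnodes hp, Finset.sum_filter]
  simp only [ite_mul, one_mul, zero_mul]

lemma visits_updateSub_of_mem_visitedNodes (h : ψ ∈ visitedNodes M π φ) :
    visits M π φ (updateSub ψ (π ψ) (φ (π ψ))) := by
  obtain ⟨⟨n, rfl⟩, hf⟩ := mem_visitedNodes.1 h
  exact ⟨n + 1, execAux_succ_of_lt hf⟩

lemma IsPolicy.injOn_visitedNodes (hπ : IsPolicy M π) (φ : E → O) :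
    Set.InjOn π (visitedNodes M π φ) := by
  intro ψ hψ ψ' hψ' heq
  obtain ⟨⟨m, rfl⟩, hm⟩ := mem_visitedNodes.1 hψ
  obtain ⟨⟨n, rfl⟩, hn⟩ := mem_visitedNodes.1 hψ'
  rw [hπ.injOn_select φ hm hn heq]

lemma IsPolicy.image_visitedNodes (hπ : IsPolicy M π) (φ : E → O) :
    (visitedNodes M π φ).image π = Ssel M π φ := by
  ext e
  simp only [Finset.mem_image, Ssel, Finset.mem_filter, Finset.mem_univ, true_and]
  constructor
  · rintro ⟨ψ, hψ, rfl⟩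
    obtain ⟨⟨n, rfl⟩, hn⟩ := mem_visitedNodes.1 hψ
    rw [cover, hπ.subext_execAux φ (hπ.lt_card_of_f_execAux_lt hn) _ _
      (execAux_succ_apply_select hn)]
    exact Option.some_ne_none _
  · intro he
    obtain ⟨n, hn, rfl⟩ := exists_select_eq_of_execAux_ne_none he
    exact ⟨_, mem_visitedNodes.2 ⟨⟨n, rfl⟩, hn⟩, rfl⟩

lemma IsPolicy.C_eq_sum_visitedNodes (hπ : IsPolicy M π) (φ : E → O) :
    C M π φ = ∑ ψ ∈ visitedNodes M π φ, M.c (π ψ) := by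
  rw [C, ← hπ.image_visitedNodes φ, Finset.sum_image (hπ.injOn_visitedNodes φ)]

lemma IsPolicy.ex_C (hπ : IsPolicy M π) :
    Ex M (C M π) = ∑ ψ ∈ Nnodes M π, M.c (π ψ) * Pr M (fun φ => visits M π φ ψ) := by
  rw [funext hπ.C_eq_sum_visitedNodes, ex_sum_visitedNodes]
  simp only [mul_comm _ (M.c _), ex_const_mul, ex_indicator]

end VisitedNodes

section Revenue

variable {M : Problem E O} {π : Sub E O → E} {φ : E → O} {ψ : Sub E O} {t : ℕ} {g : ℕ → ℝ}

lemma IsPolicy.leadsTo_iff (hπ : IsPolicy M π) {b : ℝ} (hb : b < M.Q) :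
    leadsTo M π b ψ φ ↔
      ψ ∈ visitedNodes M π φ ∧ M.f ψ ≤ b ∧ b < M.f (updateSub ψ (π ψ) (φ (π ψ))) := by
  constructor
  · rintro ⟨⟨n, rfl⟩, hψb, hlast⟩
    have hf := hψb.trans_lt hb
    refine ⟨mem_visitedNodes.2 ⟨⟨n, rfl⟩, hf⟩, hψb, not_le.1 fun hnext => ?_⟩
    rw [← execAux_succ_of_lt hf] at hnext
    have hobserved := hlast _ ⟨n + 1, rfl⟩ hnext _ _ (execAux_succ_apply_select hf)
    rw [hπ _ hf] at hobserved
    exact (Option.some_ne_none _).symm hobserved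
  · rintro ⟨hψ, hψb, hnext⟩
    obtain ⟨⟨n, rfl⟩, hf⟩ := mem_visitedNodes.1 hψ
    rw [← execAux_succ_of_lt hf] at hnext
    refine ⟨⟨n, rfl⟩, hψb, ?_⟩
    rintro _ ⟨m, rfl⟩ hmb
    refine hπ.subext_execAux φ (not_lt.1 fun hnm => ?_)
    exact (hnext.trans_le (hπ.f_execAux_mono φ hnm)).not_ge hmb

lemma IsPolicy.lam_eq_sum_visitedNodes (hπ : IsPolicy M π) {b : ℝ} (hb : b < M.Q) (ε : ℝ)
    (φ : E → O) :
    lam M π b ε φ = ∑ ψ ∈ visitedNodes M π φ, price M ψ (π ψ) *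
      if M.f ψ ≤ b ∧ b < M.f (updateSub ψ (π ψ) (φ (π ψ))) then ε else 0 := by
  simp only [lam, hπ.leadsTo_iff hb, ite_and, mul_ite, mul_zero, Finset.sum_ite_mem,
    Finset.univ_inter]

/-- The markers of `π`: positions `g 1 ≤ ⋯ ≤ g t` of utility below `Q`, among which the utilities of
all nodes of `N(π)` occur. The paper's convention `f(ρ_{t+1}) = Q` is the field `top`; further
positions are allowed, so that the markers may refine those of the paper. -/
structure IsMarking (M : Problem E O) (π : Sub E O → E) (t : ℕ) (g : ℕ → ℝ) : Prop where
  monotoneOn : MonotoneOn g (Set.Icc 1 (t + 1))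
  lt_Q : ∀ i ∈ Set.Icc 1 t, g i < M.Q
  top : g (t + 1) = M.Q
  f_mem_image : ∀ ψ ∈ Nnodes M π, M.f ψ ∈ g '' Set.Icc 1 (t + 1)

lemma isMarking_update {b : ℕ → ℝ} (hmono : MonotoneOn b (Set.Icc 1 t))
    (hlt : ∀ i ∈ Set.Icc 1 t, b i < M.Q)
    (hnode : ∀ ψ ∈ Nnodes M π, M.f ψ ∈ b '' Set.Icc 1 t) :
    IsMarking M π t (Function.update b (t + 1) M.Q) := by
  have hb : ∀ i ≤ t, Function.update b (t + 1) M.Q i = b i := fun i =>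
    update_add_one_of_le b M.Q
  have htop : Function.update b (t + 1) M.Q (t + 1) = M.Q := Function.update_self _ _ _
  refine ⟨fun i hi j hj hij => ?_, fun i hi => by rw [hb i hi.2]; exact hlt i hi, htop, ?_⟩
  · rcases Nat.le_or_eq_of_le_succ hj.2 with hjt | rfl
    · rw [hb i (hij.trans hjt), hb j hjt]
      exact hmono ⟨hi.1, hij.trans hjt⟩ ⟨hj.1, hjt⟩ hij
    rcases Nat.le_or_eq_of_le_succ hi.2 with hit | rfl
    · rw [hb i hit, htop]
      exact (hlt i ⟨hi.1, hit⟩).le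
    · exact le_rfl
  · intro ψ hψ
    obtain ⟨i, hi, hiψ⟩ := hnode ψ hψ
    exact ⟨i, ⟨hi.1, hi.2.trans t.le_succ⟩, (hb i hi.2).trans hiψ⟩

lemma IsMarking.f_mem_image_of_visits (hg : IsMarking M π t g) (hp : 0 < M.p φ)
    (hψ : visits M π φ ψ) : M.f ψ ∈ g '' Set.Icc 1 (t + 1) := by
  rcases hψ.f_le_Q.lt_or_eq with hf | hf
  · exact hg.f_mem_image ψ (mem_Nnodes_iff.2 ⟨hf, φ, hp, hψ⟩)
  · exact ⟨t + 1, Set.right_mem_Icc.2 (Nat.le_add_left 1 t), hg.top.trans hf.symm⟩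

lemma IsMarking.sum_lam (hg : IsMarking M π t g) (hπ : IsPolicy M π) (hp : 0 < M.p φ) :
    ∑ i ∈ Finset.Icc 1 t, lam M π (g i) (g (i + 1) - g i) φ =
      ∑ ψ ∈ visitedNodes M π φ, price M ψ (π ψ) * Fm M ψ (π ψ) φ := by
  rw [Finset.sum_congr rfl fun i hi =>
    hπ.lam_eq_sum_visitedNodes (hg.lt_Q i (Finset.mem_Icc.1 hi)) (g (i + 1) - g i) φ,
    Finset.sum_comm]
  refine Finset.sum_congr rfl fun ψ hψ => ?_
  obtain ⟨hv, hf⟩ := mem_visitedNodes.1 hψ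
  rw [← Finset.mul_sum, ← Finset.Ico_add_one_right_eq_Icc, sum_ite_sub_eq_sub hg.monotoneOn
    (hg.f_mem_image_of_visits hp hv)
    (hg.f_mem_image_of_visits hp (visits_updateSub_of_mem_visitedNodes hψ))
    (M.f_mono _ _ (subext_updateSub (hπ ψ hf) _)), Fm]

lemma IsMarking.sum_ex_lam (hg : IsMarking M π t g) (hπ : IsPolicy M π) :
    ∑ i ∈ Finset.Icc 1 t, Ex M (lam M π (g i) (g (i + 1) - g i)) =
      ∑ ψ ∈ Nnodes M π, price M ψ (π ψ) *
        (Pr M (fun φ => visits M π φ ψ) * Ex M (Fm M ψ (π ψ))) := by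
  rw [← ex_sum, ex_congr fun φ hp => hg.sum_lam hπ hp, ex_sum_visitedNodes]
  refine Finset.sum_congr rfl fun ψ hψ => ?_
  simp only [mul_left_comm _ (price _ _ _), ex_const_mul,
    hπ.ex_visits_mul_fm (hπ ψ (mem_Nnodes_iff.1 hψ).1)]

lemma IsGreedy.ex_fm_pos {α : ℝ} {σ : Sub E O → E} (hσ : IsGreedy M α σ)
    (hψ : ψ ∈ Nnodes M σ) : 0 < Ex M (Fm M ψ (σ ψ)) := by
  obtain ⟨hf, φ, hp, hv⟩ := mem_Nnodes_iff.1 hψ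
  obtain ⟨e, he, hpos⟩ := exists_fm_pos hv.subext_toSub hf
  have hgain : 0 < Ex M (Fm M ψ e) := ex_pos (fm_nonneg he) hp hpos
  refine (ex_nonneg (fm_nonneg (hσ.1 ψ hf))).lt_of_ne fun hzero => ?_
  have hgreedy := hσ.2 ψ hf e he
  rw [← hzero, mul_zero] at hgreedy
  exact (mul_pos (M.c_pos (σ ψ)) hgain).not_ge hgreedy

end Revenue

theorem greedy_cost_eq_marker_revenue_general
    (M : Problem E O) (π : Sub E O → E) (hπ : IsPolicy M π)
    (hgain : ∀ ψ ∈ Nnodes M π, Ex M (Fm M ψ (π ψ)) ≠ 0)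
    (t : ℕ) (b : ℕ → ℝ) (hmono : MonotoneOn b (Set.Icc 1 t))
    (hlt : ∀ i ∈ Set.Icc 1 t, b i < M.Q)
    (hnode : ∀ ψ ∈ Nnodes M π, M.f ψ ∈ b '' Set.Icc 1 t)
    (ε : ℕ → ℝ) (hε : ∀ i, 1 ≤ i → i < t → ε i = b (i + 1) - b i)
    (hεt : 1 ≤ t → ε t = M.Q - b t) :
    Ex M (C M π) = ∑ i ∈ Finset.Icc 1 t, Ex M (lam M π (b i) (ε i)) := by
  let g : ℕ → ℝ := Function.update b (t + 1) M.Q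
  have hg : IsMarking M π t g := isMarking_update hmono hlt hnode
  have hgb : ∀ i ≤ t, g i = b i := fun i => update_add_one_of_le b M.Q
  have hgε : ∀ i ∈ Finset.Icc 1 t, ε i = g (i + 1) - g i := by
    intro i hi
    obtain ⟨hi1, hit⟩ := Finset.mem_Icc.1 hi
    rcases hit.lt_or_eq with hit' | rfl
    · rw [hgb (i + 1) hit', hgb i hit, hε i hi1 hit']
    · rw [hg.top, hgb i le_rfl, hεt hi1]
  calc Ex M (C M π)
      = ∑ ψ ∈ Nnodes M π, M.c (π ψ) * Pr M (fun φ => visits M π φ ψ) := hπ.ex_C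
    _ = ∑ ψ ∈ Nnodes M π, price M ψ (π ψ) *
          (Pr M (fun φ => visits M π φ ψ) * Ex M (Fm M ψ (π ψ))) := by
        refine Finset.sum_congr rfl fun ψ hψ => ?_
        rw [price]
        field_simp [hgain ψ hψ]
    _ = ∑ i ∈ Finset.Icc 1 t, Ex M (lam M π (g i) (g (i + 1) - g i)) := (hg.sum_ex_lam hπ).symm
    _ = ∑ i ∈ Finset.Icc 1 t, Ex M (lam M π (b i) (ε i)) :=
        Finset.sum_congr rfl fun i hi => by
          rw [← hgε i hi, hgb i (Finset.mem_Icc.1 hi).2]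

/-- The expected cost of the adaptive greedy policy equals the total
expected revenue it collects from the markers: `E[C(σ)] = ∑_{i=1}^{|N(σ)|} E[λ_i]`,
where `ρ` enumerates `N(σ)` in non-decreasing order of utility and
`λ_i = lam M σ (f (ρ i)) (ε i)`. -/
theorem greedy_cost_eq_marker_revenue
    (M : Problem E O) (α : ℝ) (hα : 1 ≤ α)
    (σ : Sub E O → E) (hσ : IsGreedy M α σ)
    (t : ℕ) (ρ : ℕ → Sub E O)
    (hcard : t = (Nnodes M σ).card)
    (hρmem : ∀ i, 1 ≤ i → i ≤ t → ρ i ∈ Nnodes M σ)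
    (hρinj : ∀ i j, 1 ≤ i → i ≤ t → 1 ≤ j → j ≤ t → ρ i = ρ j → i = j)
    (hρmono : ∀ i j, 1 ≤ i → i ≤ j → j ≤ t → M.f (ρ i) ≤ M.f (ρ j))
    (ε : ℕ → ℝ)
    (hε : ∀ i, 1 ≤ i → i < t → ε i = M.f (ρ (i + 1)) - M.f (ρ i))
    (hεt : 1 ≤ t → ε t = M.Q - M.f (ρ t)) :
    Ex M (C M σ) = ∑ i ∈ Finset.Icc 1 t, Ex M (lam M σ (M.f (ρ i)) (ε i)) := by
  have hsurj : Set.SurjOn ρ (Finset.Icc 1 t) (Nnodes M σ) :=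
    Finset.surjOn_of_injOn_of_card_le ρ
      (fun i hi => hρmem i (Finset.mem_Icc.1 hi).1 (Finset.mem_Icc.1 hi).2)
      (fun i hi j hj => hρinj i j (Finset.mem_Icc.1 hi).1 (Finset.mem_Icc.1 hi).2
        (Finset.mem_Icc.1 hj).1 (Finset.mem_Icc.1 hj).2)
      (by rw [Nat.card_Icc, Nat.add_sub_cancel, hcard])
  refine greedy_cost_eq_marker_revenue_general M σ hσ.1 (fun ψ hψ => (hσ.ex_fm_pos hψ).ne') t
    (fun i => M.f (ρ i)) (fun i hi j hj hij => hρmono i j hi.1 hij hj.2)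
    (fun i hi => (mem_Nnodes_iff.1 (hρmem i hi.1 hi.2)).1) (fun ψ hψ => ?_) ε hε hεt
  obtain ⟨i, hi, rfl⟩ := hsurj hψ
  exact ⟨i, Finset.mem_Icc.1 hi, rfl⟩

end
end SSC
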